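/- arXiv:2110.07591 — 2 statements merged into one kernel-verified Lean document; each statement's English description precedes it below -/
import Mathlib

section
/- (Vanishing of χ_{π,l} for l = 0.) Let n ≥ 1 and let π be a Dyck path given by a nondecreasing function h : {1,…,n} → {1,…,n} with h(i) ≥ i, with region D(π) = {(i,j) : i < j ≤ h(i)}. Then for every label b₀ : {1,…,n} → ℕ_{≥1}, the following identity holds in ℤ[q]: ∑_b ∑_{t ∈ {0,1}ⁿ} (−1)^{t₁+⋯+tₙ} q^{inv_π(b·t)} = 0, where the outer sum is over all b : {1,…,n} → ℕ_{≥1} that are rearrangements of b₀ (i.e. b = b₀∘σ for some permutation σ of {1,…,n}). In other words, the symmetric function χ_{π,0}[Y;q] vanishes. -/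
/-- `ε` for super letters: a super letter is a pair `(v, s)` with `s = true` meaning
"barred" (negative), ordered by `1 < 1̄ < 2 < 2̄ < ⋯`.  `ε(c,c') = 1` iff `c > c'` or
`c = c'` with `c` negative, which amounts to `c'.1 < c.1` or (`c.1 = c'.1` and `c`
negative). -/
def epsSuper (c c' : ℕ × Bool) : ℕ :=
  if c'.1 < c.1 ∨ (c.1 = c'.1 ∧ c.2 = true) then 1 else 0

/-- The super label `b·t`: `(b·t)ᵢ = bᵢ` (positive) if `tᵢ = 0`, and `bᵢ + N` (barred)
if `tᵢ = 1`, where `N = max(b₁,…,bₙ)`. -/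
def superLabel {n : ℕ} (b : Fin n → ℕ) (t : Fin n → Bool) (i : Fin n) : ℕ × Bool :=
  (if t i then b i + Finset.univ.sup b else b i, t i)

/-- `inv_π(c) = ∑_{(i,j)∈D(π)} ε(cᵢ,cⱼ)`, where the Dyck path `π` is encoded by the
nondecreasing function `h` with `h(i) ≥ i` and `D(π) = {(i,j) : i < j ≤ h(i)}`. -/
def invPi {n : ℕ} (h : Fin n → Fin n) (c : Fin n → ℕ × Bool) : ℕ :=
  ∑ p ∈ Finset.univ.filter (fun p : Fin n × Fin n => p.1 < p.2 ∧ p.2 ≤ h p.1),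
    epsSuper (c p.1) (c p.2)

/-!
Since the barred letters are shifted by `N`, the super label `b·t` amounts to the word of letters
`(tᵢ, bᵢ)` ordered lexicographically: `1 < ⋯ < N < 1̄ < ⋯ < N̄`.

The generating function of the inversions of such words is symmetric in the barred letters. For two
adjacent barred letters occupying together the positions `T`, of which the first one occupies
`A ⊆ T`, this says that the number of pairs of `D(π)` leading from `A` to `T \ A` and the number of
those leading back are equidistributed given `#A`. One removes a pair `(i, j)` of `D(π)` not nested
in another one. It matters only if `i` and `j` carry different letters, and then each `m ∈ T`
between `i` and `j` contributes exactly one inversion with `i` or `j`, whatever its letter; so the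
correction is a sum of the same shape over `T \ {i, j}`, and induction applies.

So the barred letters may be reversed to `1 < ⋯ < N < N̄ < ⋯ < 1̄` without changing the sum. Now `N`
and `N̄` are neighbours, and toggling the bar at the last position carrying the largest label
changes the sign of a word but not its inversions.
-/

section EdgeCounts

open Finset

variable {ι : Type*} [DecidableEq ι]

/-- The number of pairs of `E` leading from `U` to `V`. -/
def edgeCount (E : Finset (ι × ι)) (U V : Finset ι) : ℕ :=
  #{p ∈ E | p.1 ∈ U ∧ p.2 ∈ V}

variable {E : Finset (ι × ι)} {i j : ι}

theorem edgeCount_eq_sum (E : Finset (ι × ι)) (U V : Finset ι) :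
    edgeCount E U V = ∑ u ∈ U, ∑ v ∈ V, if (u, v) ∈ E then 1 else 0 := by
  rw [← sum_product', ← card_filter, edgeCount]
  congr 1
  ext p
  simp only [mem_filter, mem_product, and_comm]

theorem edgeCount_eq_edgeCount_erase_add (hij : (i, j) ∈ E) (U V : Finset ι) :
    edgeCount E U V = edgeCount (E.erase (i, j)) U V + if i ∈ U ∧ j ∈ V then 1 else 0 := by
  simp only [edgeCount, card_filter]
  exact (sum_erase_add _ _ hij).symm

theorem edgeCount_insert_left {U : Finset ι} (hi : i ∉ U) (E : Finset (ι × ι)) (V : Finset ι) :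
    edgeCount E (insert i U) V = #{v ∈ V | (i, v) ∈ E} + edgeCount E U V := by
  simp only [edgeCount_eq_sum, sum_insert hi, card_filter]

theorem edgeCount_insert_right {V : Finset ι} (hj : j ∉ V) (E : Finset (ι × ι)) (U : Finset ι) :
    edgeCount E U (insert j V) = #{u ∈ U | (u, j) ∈ E} + edgeCount E U V := by
  simp only [edgeCount_eq_sum, sum_insert hj, sum_add_distrib, card_filter]

end EdgeCounts

section PowersetSums

open Finset

variable {α M : Type*} [DecidableEq α] [AddCommMonoid M]

theorem sum_powerset_sdiff_comm (T : Finset α)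
    (F : Finset α → Finset α → M) :
    ∑ A ∈ T.powerset, F A (T \ A) = ∑ A ∈ T.powerset, F (T \ A) A := by
  refine sum_nbij' (T \ ·) (T \ ·) ?_ ?_ ?_ ?_ ?_ <;> intro A hA <;> simp_all

theorem sum_powerset_insert_insert_ite
    {T : Finset α} {a b : α} (ha : a ∉ T) (hb : b ∉ T) (hab : a ≠ b) (F : Finset α → M) :
    ∑ A ∈ (insert a (insert b T)).powerset, (if a ∈ A ∧ b ∉ A then F A else 0) =
      ∑ A ∈ T.powerset, F (insert a A) := by
  have haT : a ∉ insert b T := by simp [hab, ha]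
  rw [sum_powerset_insert haT, sum_powerset_insert hb, sum_powerset_insert hb]
  have hF : ∀ A ∈ T.powerset, (if b ∉ A then F (insert a A) else 0) = F (insert a A) :=
    fun A hA ↦ if_pos (notMem_mono (mem_powerset.mp hA) hb)
  have h0 : ∀ A ∈ T.powerset, (if a ∈ A ∧ b ∉ A then F A else 0) = 0 :=
    fun A hA ↦ if_neg fun h ↦ ha (mem_powerset.mp hA h.1)
  simp only [mem_insert, hab.symm, true_or, or_true, false_or, true_and, not_true,
    and_false, if_false, sum_const_zero, add_zero, sum_congr rfl hF, sum_congr rfl h0, zero_add]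

end PowersetSums

section DyckRegions

open Finset

variable {ι : Type*} [LinearOrder ι]

/-- A finite set of pairs `i < j`, viewed as intervals, that is closed under passing to
subintervals: for `ι = Fin n` these are the regions `D(π)` of Dyck paths. -/
structure IsDyckRegion (E : Finset (ι × ι)) : Prop where
  lt : ∀ ⦃i j⦄, (i, j) ∈ E → i < j
  mem_of_nested : ∀ ⦃i j a b⦄, (i, j) ∈ E → i ≤ a → a < b → b ≤ j → (a, b) ∈ E

/-- A pair of a region which, viewed as an interval, is contained in no other pair of the region:
a corner of the Dyck path. -/
def IsOutermost (E : Finset (ι × ι)) (i j : ι) : Prop :=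
  (i, j) ∈ E ∧ ∀ ⦃a b⦄, (a, b) ∈ E → a ≤ i → j ≤ b → a = i ∧ b = j

variable {E : Finset (ι × ι)} {i j : ι}

theorem exists_isOutermost (hE : E.Nonempty) : ∃ i j, IsOutermost E i j := by
  obtain ⟨⟨i, j⟩, hij, hmax⟩ := E.exists_maximalFor (fun p ↦ (OrderDual.toDual p.1, p.2)) hE
  refine ⟨i, j, hij, fun a b hab hai hjb ↦ ?_⟩
  have hle := hmax hab ⟨hai, hjb⟩
  exact ⟨hai.antisymm hle.1, le_antisymm hle.2 hjb⟩

theorem IsDyckRegion.erase_of_isOutermost (hE : IsDyckRegion E) (hij : IsOutermost E i j) :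
    IsDyckRegion (E.erase (i, j)) where
  lt _ _ h := hE.lt (mem_of_mem_erase h)
  mem_of_nested a b a' b' h haa' hab' hbb' := by
    obtain ⟨hne, hab⟩ := mem_erase.mp h
    refine mem_erase.mpr ⟨fun heq ↦ hne ?_, hE.mem_of_nested hab haa' hab' hbb'⟩
    obtain ⟨rfl, rfl⟩ := Prod.mk.inj heq
    obtain ⟨rfl, rfl⟩ := hij.2 hab haa' hbb'
    rfl

theorem IsDyckRegion.left_mem_erase_iff (hE : IsDyckRegion E) (hij : IsOutermost E i j) {v : ι}
    (hv : v ≠ j) : (i, v) ∈ E.erase (i, j) ↔ i < v ∧ v < j := by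
  refine ⟨fun h ↦ ?_, fun h ↦ mem_erase.mpr ⟨by simp [hv], ?_⟩⟩
  · have hiv := mem_of_mem_erase h
    exact ⟨hE.lt hiv, lt_of_not_ge fun hjv ↦ hv (hij.2 hiv le_rfl hjv).2⟩
  · exact hE.mem_of_nested hij.1 le_rfl h.1 h.2.le

theorem IsDyckRegion.right_mem_erase_iff (hE : IsDyckRegion E) (hij : IsOutermost E i j) {u : ι}
    (hu : u ≠ i) : (u, j) ∈ E.erase (i, j) ↔ i < u ∧ u < j := by
  refine ⟨fun h ↦ ?_, fun h ↦ mem_erase.mpr ⟨by simp [hu], ?_⟩⟩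
  · have huj := mem_of_mem_erase h
    exact ⟨lt_of_not_ge fun hui ↦ hu (hij.2 huj hui le_rfl).1, hE.lt huj⟩
  · exact hE.mem_of_nested hij.1 h.1.le h.2 le_rfl

/-- The number `#{m ∈ U ∪ V | i < m < j}` does not depend on how `U ∪ V` is split. -/
theorem IsDyckRegion.edgeCount_erase_insert_insert (hE : IsDyckRegion E)
    (hij : IsOutermost E i j) {U V : Finset ι} (hUV : Disjoint U V) (hi : i ∉ U ∪ V)
    (hj : j ∉ U ∪ V) :
    edgeCount (E.erase (i, j)) (insert i U) (insert j V) =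
      edgeCount (E.erase (i, j)) U V + #{m ∈ U ∪ V | i < m ∧ m < j} := by
  simp only [mem_union, not_or] at hi hj
  have hleft : {v ∈ insert j V | (i, v) ∈ E.erase (i, j)} = {v ∈ V | i < v ∧ v < j} := by
    rw [filter_insert, if_neg (notMem_erase _ _)]
    exact filter_congr fun v hv ↦ hE.left_mem_erase_iff hij (ne_of_mem_of_not_mem hv hj.2)
  have hright : {u ∈ U | (u, j) ∈ E.erase (i, j)} = {u ∈ U | i < u ∧ u < j} :=
    filter_congr fun u hu ↦ hE.right_mem_erase_iff hij (ne_of_mem_of_not_mem hu hi.1)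
  rw [edgeCount_insert_left hi.1, edgeCount_insert_right hj.2, hleft, hright, filter_union,
    card_union_of_disjoint (disjoint_filter_filter hUV)]
  ring

variable {M : Type*} [AddCommGroup M]

theorem IsDyckRegion.sum_powerset_edgeCount_erase (hE : IsDyckRegion E)
    (hij : IsOutermost E i j) {T : Finset ι} (hi : i ∉ T) (hj : j ∉ T) (g : ℕ → ℕ → ℕ → M) :
    let T' := insert i (insert j T)
    let E' := E.erase (i, j)
    let c := #{m ∈ T | i < m ∧ m < j}
    ∑ A ∈ T'.powerset, g #A #(T' \ A) (edgeCount E A (T' \ A)) =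
      ∑ A ∈ T'.powerset, g #A #(T' \ A) (edgeCount E' A (T' \ A)) +
        ∑ A ∈ T.powerset,
          (g (#A + 1) (#(T \ A) + 1) (edgeCount E' A (T \ A) + c + 1) -
            g (#A + 1) (#(T \ A) + 1) (edgeCount E' A (T \ A) + c)) := by
  intro T' E' c
  have hne : i ≠ j := (hE.lt hij.1).ne
  let Δ (A : Finset ι) : M :=
    g #A #(T' \ A) (edgeCount E' A (T' \ A) + 1) - g #A #(T' \ A) (edgeCount E' A (T' \ A))
  have hsplit : ∀ A, g #A #(T' \ A) (edgeCount E A (T' \ A)) =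
      g #A #(T' \ A) (edgeCount E' A (T' \ A)) + if i ∈ A ∧ j ∉ A then Δ A else 0 := by
    intro A
    have hjA : j ∈ T' \ A ↔ j ∉ A := by simp [T']
    rw [edgeCount_eq_edgeCount_erase_add hij.1]
    simp only [hjA]
    split_ifs <;> simp [Δ, E']
  simp only [hsplit, sum_add_distrib]
  rw [sum_powerset_insert_insert_ite hi hj hne]
  congr 1
  refine sum_congr rfl fun A hA ↦ ?_
  have hAT := mem_powerset.mp hA
  have hiA : i ∉ A := notMem_mono hAT hi
  have hjA : j ∉ insert i A := by simpa [hne.symm] using notMem_mono hAT hj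
  have hunion : A ∪ T \ A = T := union_sdiff_of_subset hAT
  have hcompl : T' \ insert i A = insert j (T \ A) := by
    rw [insert_sdiff_insert, insert_sdiff_of_notMem _ hjA, sdiff_insert_of_notMem hi]
  have hcount : edgeCount E' (insert i A) (insert j (T \ A)) = edgeCount E' A (T \ A) + c := by
    have := hE.edgeCount_erase_insert_insert hij (disjoint_sdiff (s := A) (t := T))
    rw [hunion] at this
    exact this hi hj
  simp only [Δ]
  rw [hcompl, hcount, card_insert_of_notMem hiA, card_insert_of_notMem (by simp [hj])]

/-- Both sides satisfy the recursion obtained by erasing an outermost pair, whose correction term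
is a sum of the same shape over a smaller vertex set. -/
theorem IsDyckRegion.sum_powerset_edgeCount_swap (hE : IsDyckRegion E) (T : Finset ι)
    (g : ℕ → ℕ → ℕ → M) :
    ∑ A ∈ T.powerset, g #A #(T \ A) (edgeCount E A (T \ A)) =
      ∑ A ∈ T.powerset, g #(T \ A) #A (edgeCount E A (T \ A)) := by
  induction E using Finset.strongInduction generalizing T g with
  | H E ih =>
    rcases E.eq_empty_or_nonempty with rfl | hne
    · simp only [edgeCount, filter_empty, card_empty]
      exact sum_powerset_sdiff_comm T fun A B ↦ g #A #B 0
    obtain ⟨i, j, hij⟩ := exists_isOutermost hne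
    have ih' := ih _ (erase_ssubset hij.1) (hE.erase_of_isOutermost hij)
    by_cases hT : i ∈ T ∧ j ∈ T
    · obtain ⟨T₀, hi, hj, rfl⟩ : ∃ T₀, i ∉ T₀ ∧ j ∉ T₀ ∧ insert i (insert j T₀) = T :=
        ⟨(T.erase i).erase j, by simp, by simp, by grind⟩
      rw [hE.sum_powerset_edgeCount_erase hij hi hj g,
        hE.sum_powerset_edgeCount_erase hij hi hj fun a b ↦ g b a, ih' _ g,
        ih' T₀ fun a b d ↦ g (a + 1) (b + 1) (d + _ + 1) - g (a + 1) (b + 1) (d + _)]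
    · have herase : ∀ A ∈ T.powerset,
          edgeCount E A (T \ A) = edgeCount (E.erase (i, j)) A (T \ A) := by
        intro A hA
        rw [edgeCount_eq_edgeCount_erase_add hij.1, if_neg, add_zero]
        exact fun h ↦ hT ⟨mem_powerset.mp hA h.1, (mem_sdiff.mp h.2).1⟩
      rw [sum_congr rfl fun A hA ↦ by rw [herase A hA], ih' T g]
      exact sum_congr rfl fun A hA ↦ by rw [herase A hA]

theorem IsDyckRegion.sum_powerset_edgeCount_comm (hE : IsDyckRegion E) (T : Finset ι)
    (f : ℕ → ℕ → M) :
    ∑ A ∈ T.powerset, f #A (edgeCount E A (T \ A)) =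
      ∑ A ∈ T.powerset, f #A (edgeCount E (T \ A) A) :=
  (hE.sum_powerset_edgeCount_swap T fun a _ d ↦ f a d).trans
    (sum_powerset_sdiff_comm T fun A B ↦ f #A (edgeCount E B A)).symm

end DyckRegions

section ContentSymmetries

open Finset Equiv

variable {ι β : Type*} [Fintype ι]

/-- The content of a word: the multiset of its letters. -/
def content (c : ι → β) : Multiset β :=
  univ.val.map c

theorem content_comp_perm (c : ι → β) (σ : Perm ι) : content (c ∘ σ) = content c := by
  rw [content, ← Multiset.map_map, Multiset.map_univ_val_equiv, content]

theorem map_content {γ : Type*} (g : β → γ) (c : ι → β) : (content c).map g = content (g ∘ c) :=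
  Multiset.map_map g c _

theorem content_eq_content_iff {b c : ι → β} :
    content b = content c ↔ ∃ σ : Perm ι, c ∘ σ = b := by
  classical
  refine ⟨fun h ↦ ?_, ?_⟩
  · have hcard (x : β) : Fintype.card {i // b i = x} = Fintype.card {i // c i = x} := by
      have hcount := congrArg (Multiset.count x) h
      simp only [content, Multiset.count_map, eq_comm (a := x)] at hcount
      simp only [Fintype.card_subtype]
      exact hcount
    exact ⟨Equiv.ofFiberEquiv fun x ↦ Fintype.equivOfCardEq (hcard x),
      funext fun i ↦ Equiv.ofFiberEquiv_map _ i⟩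
  · rintro ⟨σ, rfl⟩
    exact content_comp_perm c σ

variable [DecidableEq ι]

theorem content_piecewise_const {c : ι → β} {x : β} (y : β) {B : Finset ι}
    (hB : ∀ i ∈ B, c i = x) [DecidableEq β] :
    content (B.piecewise (fun _ ↦ y) c) =
      content c - Multiset.replicate #B x + Multiset.replicate #B y := by
  have hcontent (d : ι → β) : content d = ∑ i ∈ B, {d i} + ∑ i ∈ Bᶜ, {d i} := by
    rw [sum_add_sum_compl, content, ← Multiset.sum_map_singleton (univ.val.map d),
      Multiset.map_map]
    rfl
  have hB' : ∑ i ∈ B, ({c i} : Multiset β) = Multiset.replicate #B x := by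
    rw [sum_congr rfl fun i hi ↦ by rw [hB i hi], sum_const, Multiset.nsmul_singleton]
  have hBy : ∑ i ∈ B, ({B.piecewise (fun _ ↦ y) c i} : Multiset β) = Multiset.replicate #B y := by
    rw [sum_congr rfl fun i hi ↦ by rw [piecewise_eq_of_mem _ _ _ hi], sum_const,
      Multiset.nsmul_singleton]
  rw [hcontent, hcontent c, hB', hBy, add_tsub_cancel_left, add_comm]
  congr 1
  exact sum_congr rfl fun i hi ↦ by rw [piecewise_eq_of_notMem _ _ _ (mem_compl.mp hi)]

/-- The words fall into classes with the same set of positions labelled `x` or `y`; each class has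
a unique member `c` avoiding `y`, and the others turn some of its letters `x` into `y`. -/
theorem sum_eq_sum_sum_piecewise {M : Type*} [AddCommMonoid M] [Fintype β] [DecidableEq β]
    {x y : β} (hxy : x ≠ y) (F : (ι → β) → M) :
    ∑ b, F b = ∑ c : ι → β with ∀ i, c i ≠ y, ∑ B ∈ ({i | c i = x} : Finset ι).powerset,
      F (B.piecewise (fun _ ↦ y) c) := by
  rw [sum_sigma']
  refine sum_bij' (fun b _ ↦ ⟨fun i ↦ if b i = y then x else b i, ({i | b i = y} : Finset ι)⟩)
    (fun p _ ↦ p.2.piecewise (fun _ ↦ y) p.1) ?_ ?_ ?_ ?_ ?_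
  · intro b _
    simp only [mem_sigma, mem_filter, mem_univ, true_and, mem_powerset]
    grind
  · simp
  · intro b _
    ext i
    by_cases hi : b i = y <;> simp [hi]
  · rintro ⟨c, B⟩ hcB
    simp only [mem_sigma, mem_filter, mem_univ, true_and, mem_powerset, subset_iff] at hcB
    obtain ⟨hc, hB⟩ := hcB
    have heq (i : ι) : B.piecewise (fun _ ↦ y) c i = y ↔ i ∈ B := by
      by_cases hi : i ∈ B <;> simp [hi, hc i]
    simp only [heq, filter_univ_mem]
    congr 1
    ext i
    by_cases hi : i ∈ B
    · simp [hi, hB hi]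
    · simp [hi]
  · intro b _
    congr 1
    ext i
    by_cases hi : b i = y <;> simp [hi]

/-- The permutations `σ` of the letters under which the generating function
`∑_c q^{s(c)} ∏ᵢ Y_{c(i)}` of the statistic `s` is symmetric; arbitrary weights `f` with values
in `M` replace the monomials. -/
def contentSymmetries (M : Type*) [AddCommMonoid M] [Fintype β] (s : (ι → β) → ℕ) :
    Submonoid (Perm β) where
  carrier := {σ | ∀ f : Multiset β → ℕ → M,
    ∑ c : ι → β, f (content c) (s (σ ∘ c)) = ∑ c : ι → β, f (content c) (s c)}
  one_mem' _ := rfl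
  mul_mem' {σ τ} hσ hτ f := by
    have hτc (c : ι → β) : (content (τ ∘ c)).map τ.symm = content c := by
      simp [content]
    calc ∑ c : ι → β, f (content c) (s (σ ∘ τ ∘ c))
        = ∑ c : ι → β, f ((content (τ ∘ c)).map τ.symm) (s (σ ∘ τ ∘ c)) := by simp only [hτc]
      _ = ∑ c : ι → β, f ((content c).map τ.symm) (s (σ ∘ c)) :=
        (Equiv.arrowCongr (Equiv.refl ι) τ).sum_comp
          fun c ↦ f ((content c).map τ.symm) (s (σ ∘ c))
      _ = ∑ c : ι → β, f ((content c).map τ.symm) (s c) := hσ fun m ↦ f (m.map τ.symm)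
      _ = ∑ c : ι → β, f ((content (τ ∘ c)).map τ.symm) (s (τ ∘ c)) :=
        ((Equiv.arrowCongr (Equiv.refl ι) τ).sum_comp
          fun c ↦ f ((content c).map τ.symm) (s c)).symm
      _ = ∑ c : ι → β, f (content c) (s (τ ∘ c)) := by simp only [hτc]
      _ = ∑ c : ι → β, f (content c) (s c) := hτ f

end ContentSymmetries

section RelationCounts

open Finset Equiv

variable {ι β : Type*}

/-- The number of pairs of positions in `E` at which the letters of the word `c` satisfy `r`: the
inversion number of `c` along `E` when `r` says which pairs of letters are inverted. -/
def relCount (E : Finset (ι × ι)) (r : β → β → Prop) [DecidableRel r] (c : ι → β) : ℕ :=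
  #{p ∈ E | r (c p.1) (c p.2)}

/-- The letter `y` comes right after `x` as far as the inversion relation `r` can tell, both letters
being inverted with themselves. -/
structure IsAdjacentPair (r : β → β → Prop) (x y : β) : Prop where
  left_self : r x x
  right_self : r y y
  right_left : r y x
  not_left_right : ¬ r x y
  right_iff_left : ∀ ⦃z⦄, z ≠ x → z ≠ y → (r y z ↔ r x z)
  iff_right_left : ∀ ⦃z⦄, z ≠ x → z ≠ y → (r z y ↔ r z x)

variable {r : β → β → Prop} {x y : β}

theorem IsAdjacentPair.ne (h : IsAdjacentPair r x y) : x ≠ y := by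
  rintro rfl
  exact h.not_left_right h.left_self

variable [Fintype ι] [DecidableRel r] [DecidableEq β]

theorem IsAdjacentPair.relCount_piecewise_add_edgeCount [DecidableEq ι] (h : IsAdjacentPair r x y)
    (E : Finset (ι × ι)) {c : ι → β} (hc : ∀ i, c i ≠ y) {B : Finset ι}
    (hB : B ⊆ ({i | c i = x} : Finset ι)) :
    relCount E r (B.piecewise (fun _ ↦ y) c) + edgeCount E (({i | c i = x} : Finset ι) \ B) B =
      relCount E r c := by
  obtain ⟨hxx, hyy, hyx, hxy, hleft, hright⟩ := h
  simp only [relCount, edgeCount, card_filter, ← sum_add_distrib]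
  refine sum_congr rfl fun p _ ↦ ?_
  have h1 := @hB p.1
  have h2 := @hB p.2
  simp only [mem_filter, mem_univ, true_and, mem_sdiff] at h1 h2 ⊢
  by_cases hp1 : p.1 ∈ B <;> by_cases hp2 : p.2 ∈ B <;> by_cases hx1 : c p.1 = x <;>
    by_cases hx2 : c p.2 = x <;> simp_all

theorem swap_comp_piecewise_const [DecidableEq ι] {c : ι → β} (hc : ∀ i, c i ≠ y) {B : Finset ι}
    (hB : B ⊆ ({i | c i = x} : Finset ι)) :
    swap x y ∘ B.piecewise (fun _ ↦ y) c =
      (({i | c i = x} : Finset ι) \ B).piecewise (fun _ ↦ y) c := by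
  funext i
  have hi := @hB i
  simp only [mem_filter, mem_univ, true_and] at hi
  by_cases hiB : i ∈ B
  · simp [hiB, hi hiB]
  · by_cases hx : c i = x
    · simp [hiB, hx]
    · simp [hiB, hx, swap_apply_of_ne_of_ne hx (hc i)]

theorem IsDyckRegion.swap_mem_contentSymmetries [LinearOrder ι] {E : Finset (ι × ι)}
    (hE : IsDyckRegion E) (h : IsAdjacentPair r x y) (M : Type*) [AddCommGroup M] [Fintype β] :
    swap x y ∈ contentSymmetries M (relCount E r) := by
  intro f
  rw [sum_eq_sum_sum_piecewise h.ne, sum_eq_sum_sum_piecewise h.ne]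
  refine sum_congr rfl fun c hc ↦ ?_
  have hcy : ∀ i, c i ≠ y := (mem_filter.mp hc).2
  set S : Finset ι := {i | c i = x}
  let g (k d : ℕ) : M :=
    f (content c - Multiset.replicate k x + Multiset.replicate k y) (relCount E r c - d)
  have hcontent : ∀ B ∈ S.powerset, content (B.piecewise (fun _ ↦ y) c) =
      content c - Multiset.replicate #B x + Multiset.replicate #B y := fun B hB ↦
    content_piecewise_const y fun i hi ↦ (mem_filter.mp (mem_powerset.mp hB hi)).2
  have hcount : ∀ B ⊆ S, relCount E r (B.piecewise (fun _ ↦ y) c) =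
      relCount E r c - edgeCount E (S \ B) B := fun B hB ↦
    Nat.eq_sub_of_add_eq (h.relCount_piecewise_add_edgeCount E hcy hB)
  calc ∑ B ∈ S.powerset, f (content (B.piecewise (fun _ ↦ y) c))
        (relCount E r (swap x y ∘ B.piecewise (fun _ ↦ y) c))
      = ∑ B ∈ S.powerset, g #B (edgeCount E B (S \ B)) := by
        refine sum_congr rfl fun B hB ↦ ?_
        have hBS := mem_powerset.mp hB
        rw [hcontent B hB, swap_comp_piecewise_const hcy hBS, hcount _ sdiff_subset,
          Finset.sdiff_sdiff_eq_self hBS]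
    _ = ∑ B ∈ S.powerset, g #B (edgeCount E (S \ B) B) := hE.sum_powerset_edgeCount_comm S g
    _ = ∑ B ∈ S.powerset, f (content (B.piecewise (fun _ ↦ y) c))
          (relCount E r (B.piecewise (fun _ ↦ y) c)) := by
        refine sum_congr rfl fun B hB ↦ ?_
        rw [hcontent B hB, hcount B (mem_powerset.mp hB)]

end RelationCounts

section ProdExtendRight

open Equiv

variable {α γ : Type*} [DecidableEq γ]

theorem prodExtendRight_one (a : γ) : Perm.prodExtendRight a (1 : Perm α) = 1 := by
  ext ⟨b, x⟩ <;> by_cases hb : b = a <;> simp [Perm.prodExtendRight, hb]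

theorem prodExtendRight_mul (a : γ) (σ τ : Perm α) :
    Perm.prodExtendRight a (σ * τ) = Perm.prodExtendRight a σ * Perm.prodExtendRight a τ := by
  ext ⟨b, x⟩ <;> by_cases hb : b = a <;> simp [Perm.prodExtendRight, hb]

theorem prodExtendRight_swap [DecidableEq α] (a : γ) (x y : α) :
    Perm.prodExtendRight a (swap x y) = swap (a, x) (a, y) := by
  ext ⟨b, z⟩ <;> simp only [Perm.prodExtendRight, swap_apply_def, coe_fn_mk, Prod.mk.injEq] <;>
    grind

end ProdExtendRight

section SuperLetters

open Finset Equiv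

variable {α : Type*} [LinearOrder α]

/-- The relation `ε(c, c') = 1` for super letters `(s, a)`, barred when `s = true`. Shifting the
barred letters by `N` puts them all above the unbarred ones, so the order is lexicographic. -/
def SuperInv (c c' : Bool × α) : Prop :=
  toLex c' < toLex c ∨ c = c' ∧ c.1 = true

instance : DecidableRel (SuperInv (α := α)) :=
  fun _ _ ↦ inferInstanceAs (Decidable (_ ∨ _))

theorem isAdjacentPair_superInv {a b : α} (hab : a ⋖ b) :
    IsAdjacentPair SuperInv (true, a) (true, b) := by
  have hlt := hab.lt
  have hge (z : α) (hz : a < z) : b ≤ z := hab.ge_of_gt hz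
  have hle (z : α) (hz : z < b) : z ≤ a := hab.le_of_lt hz
  constructor <;> simp [SuperInv, Prod.Lex.toLex_lt_toLex]
  all_goals grind

theorem IsDyckRegion.prodExtendRight_mem_contentSymmetries {ι : Type*} [Fintype ι]
    [LinearOrder ι] {E : Finset (ι × ι)} (hE : IsDyckRegion E) {N : ℕ} (σ : Perm (Fin (N + 1)))
    (M : Type*) [AddCommGroup M] :
    Perm.prodExtendRight true σ ∈ contentSymmetries M (relCount E SuperInv) := by
  have hσ : σ ∈ Submonoid.closure (Set.range fun v : Fin N ↦ swap v.castSucc v.succ) := by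
    rw [Perm.mclosure_swap_castSucc_succ]
    trivial
  induction hσ using Submonoid.closure_induction with
  | mem _ hv =>
    obtain ⟨v, rfl⟩ := hv
    rw [prodExtendRight_swap]
    exact hE.swap_mem_contentSymmetries (isAdjacentPair_superInv ⟨v.castSucc_lt_succ, by grind⟩) M
  | one =>
    rw [prodExtendRight_one]
    exact one_mem _
  | mul σ τ _ _ hσ hτ =>
    rw [prodExtendRight_mul]
    exact mul_mem hσ hτ

theorem superInv_prodExtendRight_iff {σ : Perm α} (hσ : StrictAnti σ) (s s' : Bool) (a a' : α) :
    SuperInv (Perm.prodExtendRight true σ (s, a)) (Perm.prodExtendRight true σ (s', a')) ↔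
      if a' < a then s' = false else s = true := by
  have hlt : σ a' < σ a ↔ a < a' := hσ.lt_iff_gt
  cases s <;> cases s' <;> simp [SuperInv, Perm.prodExtendRight, Prod.Lex.toLex_lt_toLex, hlt,
    le_iff_lt_or_eq]

end SuperLetters

section SignReversal

open Finset Equiv

theorem exists_last_maximizer {ι α : Type*} [Finite ι] [Nonempty ι] [LinearOrder ι] [LinearOrder α]
    (b : ι → α) :
    ∃ j, (∀ i, b i ≤ b j) ∧ ∀ i, j < i → b i < b j := by
  obtain ⟨j, hj⟩ := Finite.exists_max fun i ↦ toLex (b i, i)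
  simp only [Prod.Lex.toLex_le_toLex] at hj
  exact ⟨j, fun i ↦ by grind, fun i hi ↦ by grind⟩

variable {ι R : Type*} [Fintype ι]

theorem sum_neg_one_pow_card_mul_eq_zero_of_update [DecidableEq ι] [CommRing R] (j : ι)
    {F : (ι → Bool) → R} (hF : ∀ t, F (Function.update t j (!t j)) = F t) :
    ∑ t : ι → Bool, (-1) ^ #{i | t i = true} * F t = 0 := by
  have hsign (t : ι → Bool) : (-1 : R) ^ #{i | t i = true} =
      (if t j = true then -1 else 1) * ∏ i ∈ univ.erase j, if t i = true then -1 else 1 := by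
    rw [mul_prod_erase _ (fun i ↦ if t i = true then (-1 : R) else 1) (mem_univ j), prod_ite,
      prod_const, prod_const_one, mul_one]
  refine sum_involution (fun t _ ↦ Function.update t j (!t j)) (fun t _ ↦ ?_)
    (fun t _ _ h ↦ ?_) (by simp) (by simp)
  · have hprod : ∏ i ∈ univ.erase j, (if Function.update t j (!t j) i = true then (-1 : R) else 1) =
        ∏ i ∈ univ.erase j, if t i = true then -1 else 1 :=
      prod_congr rfl fun i hi ↦ by rw [Function.update_of_ne (ne_of_mem_erase hi)]
    rw [hF, hsign, hsign, hprod, Function.update_self]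
    cases t j <;> simp
  · simpa using congrFun h j

/-- After reversing the barred letters, the last position carrying the largest label contributes the
same inversions whether it is barred or not. -/
theorem sum_neg_one_pow_mul_pow_relCount_reversed_eq_zero {α : Type*} [LinearOrder ι] [Nonempty ι]
    [LinearOrder α] [CommRing R] {E : Finset (ι × ι)} (hE : ∀ p ∈ E, p.1 < p.2) {σ : Perm α}
    (hσ : StrictAnti σ) (b : ι → α) (q : R) :
    ∑ t : ι → Bool, (-1) ^ #{i | t i = true} *
      q ^ relCount E SuperInv (Perm.prodExtendRight true σ ∘ fun i ↦ (t i, b i)) = 0 := by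
  obtain ⟨j, hle, hlt⟩ := exists_last_maximizer b
  refine sum_neg_one_pow_card_mul_eq_zero_of_update j fun t ↦ congrArg (q ^ ·) ?_
  simp only [relCount, Function.comp_apply, superInv_prodExtendRight_iff hσ]
  refine congrArg card (filter_congr fun p hp ↦ ?_)
  have hp := hE p hp
  have h1 := hle p.1
  have h2 := hlt p.2
  grind

theorem sum_sum_neg_one_pow_eq_sum_content {α : Type*} [Fintype α] [DecidableEq ι]
    [DecidableEq α] [Ring R] (s : (ι → Bool × α) → ℕ) (m : Multiset α) (q : R) :
    ∑ b with content b = m, ∑ t : ι → Bool, (-1) ^ #{i | t i = true} * q ^ s (fun i ↦ (t i, b i)) =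
      ∑ c : ι → Bool × α, if (content c).map Prod.snd = m then
        (-1) ^ (content c).countP (fun l ↦ l.1 = true) * q ^ s c else 0 := by
  have hcount (b : ι → α) (t : ι → Bool) :
      (content fun i ↦ (t i, b i)).countP (fun l ↦ l.1 = true) = #{i | t i = true} := by
    rw [content, Multiset.countP_map]
    rfl
  have hsnd (b : ι → α) (t : ι → Bool) :
      (content fun i ↦ (t i, b i)).map Prod.snd = content b :=
    map_content Prod.snd _
  rw [sum_filter, ← (arrowProdEquivProdArrow ι _ _).symm.sum_comp, Fintype.sum_prod_type_right]
  refine sum_congr rfl fun b _ ↦ ?_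
  split_ifs with hb
  · exact sum_congr rfl fun t _ ↦ by simp [arrowProdEquivProdArrow, hcount, hsnd, hb]
  · exact (sum_eq_zero fun t _ ↦ if_neg (by simpa [arrowProdEquivProdArrow, hsnd] using hb)).symm

theorem IsDyckRegion.sum_sum_neg_one_pow_mul_pow_relCount_eq_zero [LinearOrder ι] [Nonempty ι]
    [CommRing R] {E : Finset (ι × ι)} (hE : IsDyckRegion E) {N : ℕ}
    (m : Multiset (Fin (N + 1))) (q : R) :
    ∑ b with content b = m, ∑ t : ι → Bool,
      (-1) ^ #{i | t i = true} * q ^ relCount E SuperInv (fun i ↦ (t i, b i)) = 0 := by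
  let ρ := Perm.prodExtendRight true (Fin.revPerm : Perm (Fin (N + 1)))
  let f (w : Multiset (Bool × Fin (N + 1))) (d : ℕ) : R :=
    if w.map Prod.snd = m then (-1) ^ w.countP (fun l ↦ l.1 = true) * q ^ d else 0
  calc ∑ b with content b = m, ∑ t : ι → Bool,
        (-1) ^ #{i | t i = true} * q ^ relCount E SuperInv (fun i ↦ (t i, b i))
      = ∑ c : ι → Bool × Fin (N + 1), f (content c) (relCount E SuperInv c) :=
        sum_sum_neg_one_pow_eq_sum_content _ m q
    _ = ∑ c : ι → Bool × Fin (N + 1), f (content c) (relCount E SuperInv (ρ ∘ c)) :=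
        (hE.prodExtendRight_mem_contentSymmetries Fin.revPerm R f).symm
    _ = ∑ b with content b = m, ∑ t : ι → Bool,
          (-1) ^ #{i | t i = true} * q ^ relCount E SuperInv (ρ ∘ fun i ↦ (t i, b i)) :=
        (sum_sum_neg_one_pow_eq_sum_content (fun c ↦ relCount E SuperInv (ρ ∘ c)) m q).symm
    _ = 0 := sum_eq_zero fun b _ ↦
        sum_neg_one_pow_mul_pow_relCount_reversed_eq_zero (fun _ hp ↦ hE.lt hp) Fin.rev_strictAnti
          b q

end SignReversal

section DyckPaths

open Finset Equiv

variable {n : ℕ}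

/-- The region `D(π)` of the Dyck path `π` encoded by `h`. -/
def dyckRegion (h : Fin n → Fin n) : Finset (Fin n × Fin n) :=
  {p | p.1 < p.2 ∧ p.2 ≤ h p.1}

theorem isDyckRegion_dyckRegion {h : Fin n → Fin n} (hmono : Monotone h) :
    IsDyckRegion (dyckRegion h) where
  lt _ _ hij := (mem_filter.mp hij).2.1
  mem_of_nested _ _ _ _ hij hia hab hbj :=
    mem_filter.mpr ⟨mem_univ _, hab, (hbj.trans (mem_filter.mp hij).2.2).trans (hmono hia)⟩

theorem invPi_superLabel {N : ℕ} (h : Fin n → Fin n) (b : Fin n → Fin (N + 1))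
    (t : Fin n → Bool) :
    invPi h (superLabel (fun i ↦ (b i : ℕ)) t) =
      relCount (dyckRegion h) SuperInv fun i ↦ (t i, b i) := by
  rw [invPi, relCount, card_filter]
  refine sum_congr rfl fun p _ ↦ if_congr ?_ rfl rfl
  have hle1 := le_sup (f := fun i ↦ (b i : ℕ)) (mem_univ p.1)
  have hle2 := le_sup (f := fun i ↦ (b i : ℕ)) (mem_univ p.2)
  simp only [superLabel, SuperInv, Prod.Lex.toLex_lt_toLex, Fin.lt_def, Fin.ext_iff, Prod.ext_iff]
  cases t p.1 <;> cases t p.2 <;> simp [Bool.lt_iff] <;> omega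

theorem image_comp_perm_eq_image_content {N : ℕ} (β : Fin n → Fin (N + 1)) :
    univ.image (fun σ : Perm (Fin n) ↦ (fun i ↦ (β i : ℕ)) ∘ σ) =
      ({b | content b = content β} : Finset (Fin n → Fin (N + 1))).image fun b i ↦ (b i : ℕ) := by
  ext c
  simp only [mem_image, mem_filter, mem_univ, true_and, content_eq_content_iff]
  constructor
  · rintro ⟨σ, rfl⟩
    exact ⟨β ∘ σ, ⟨σ, rfl⟩, rfl⟩
  · rintro ⟨_, ⟨σ, rfl⟩, rfl⟩
    exact ⟨σ, rfl⟩

end DyckPaths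

/-- Vanishing of `χ_{π,l}` for `l = 0`: for every Dyck path `π` and every label `b₀`,
the coefficient `∑_{b rearranging b₀} ∑_{t ∈ {0,1}ⁿ} (−1)^{|t|} q^{inv_π(b·t)}` of the
monomial of content `b₀` in `χ_{π,0}[Y;q]` vanishes in `ℤ[q]`. -/
theorem chi_pi_zero_vanishes (n : ℕ) (hn : 1 ≤ n)
    (h : Fin n → Fin n) (hmono : Monotone h) (hge : ∀ i, i ≤ h i)
    (b₀ : Fin n → ℕ) (hb₀ : ∀ i, 1 ≤ b₀ i) :
    ∑ b ∈ Finset.image (fun σ : Equiv.Perm (Fin n) => b₀ ∘ ⇑σ) Finset.univ,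
      ∑ t : Fin n → Bool,
        (-1 : Polynomial ℤ) ^ ((Finset.univ.filter (fun i => t i = true)).card)
          * Polynomial.X ^ invPi h (superLabel b t) = 0 := by
  obtain ⟨N, β, rfl⟩ : ∃ N, ∃ β : Fin n → Fin (N + 1), b₀ = fun i ↦ (β i : ℕ) :=
    ⟨Finset.univ.sup b₀,
      fun i ↦ ⟨b₀ i, Nat.lt_succ_of_le (Finset.le_sup (Finset.mem_univ i))⟩, rfl⟩
  have : Nonempty (Fin n) := ⟨⟨0, hn⟩⟩
  have hinj : Function.Injective fun (b : Fin n → Fin (N + 1)) i ↦ (b i : ℕ) :=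
    Fin.val_injective.comp_left
  rw [image_comp_perm_eq_image_content, Finset.sum_image hinj.injOn]
  simp only [invPi_superLabel]
  exact (isDyckRegion_dyckRegion hmono).sum_sum_neg_one_pow_mul_pow_relCount_eq_zero
    (content β) Polynomial.X
end

section
/- (Vanishing of χ_{π,l} at a touch point.) Let n ≥ 1, let π be a Dyck path given by a nondecreasing function h : {1,…,n} → {1,…,n} with h(i) ≥ i, and let 0 ≤ l ≤ n. Suppose there exists i₀ with 1 ≤ i₀ < n and i₀ ≤ n − l such that h(j) ≤ i₀ for all j ≤ i₀ (i.e. π has a touch point: no j ≤ i₀ attacks any j' > i₀). Then for every label b₀ : {1,…,n} → ℕ_{≥1}, the following identity holds in ℤ[q]: ∑_b ∑_{t ∈ {0,1}ⁿ, t_i = 1 ⇒ i ≤ n−l} (−1)^{t₁+⋯+tₙ} q^{inv_π(b·t)} = 0, where the outer sum is over all b that are rearrangements of b₀. In other words, the symmetric function χ_{π,l}[Y;q] vanishes. -/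
/-!
Barred letters `v̄` are raised by `N`, so they exceed every unbarred letter. We lower the barred
letters at positions of the touch block one step at a time, without changing the sum. A single step
only reverses the comparison of `v` with a barred letter that was tied with it in value. Among
the positions of the block with value `v` before the step, inversions are counted by the barred
attackers before the step and by the barred attacked positions after it. The attack graph restricted
to these positions is again that of a Dyck path, so its out-degrees and in-degrees are
equidistributed, and a permutation of the positions matching them preserves the exponent of `q`.

When all shifts in the block have disappeared, the last position of the block attacks nothing, and
whether its letter is barred is invisible to inversions. Toggling that bar changes the sign and
cancels the whole sum.
-/

open Finset

section Degrees

variable {α : Type*} [LinearOrder α]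

/-- The out-degree of `i` within `s` in the attack graph of `h`, whose edges are the pairs
`i < j ≤ h i`. -/
def outdegree (h : α → α) (s : Finset α) (i : α) : ℕ :=
  #{j ∈ s | i < j ∧ j ≤ h i}

/-- The in-degree of `j` within `s` in the attack graph of `h`, whose edges are the pairs
`i < j ≤ h i`. -/
def indegree (h : α → α) (s : Finset α) (j : α) : ℕ :=
  #{i ∈ s | i < j ∧ j ≤ h i}

theorem sum_apply_card_filter_lt {M : Type*} [AddCommMonoid M] (f : ℕ → M) (s : Finset α) :
    ∑ i ∈ s, f #{j ∈ s | i < j} = ∑ k ∈ range #s, f k := by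
  induction s using Finset.induction_on_min with
  | empty => simp
  | insert a s ha ih =>
    have has : a ∉ s := fun h => lt_irrefl _ (ha a h)
    rw [sum_insert has, card_insert_of_notMem has, sum_range_succ, add_comm, ← ih]
    congr 1
    · refine sum_congr rfl fun i hi => ?_
      rw [filter_insert, if_neg (ha i hi).not_gt]
    · rw [filter_insert, if_neg (lt_irrefl a), filter_true_of_mem ha]

variable {h : α → α} {s : Finset α} {a i : α}

theorem outdegree_insert_max_self (ha : ∀ x ∈ s, x < a) : outdegree h (insert a s) a = 0 := by
  rw [outdegree, card_eq_zero, filter_eq_empty_iff]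
  rintro j hj ⟨haj, -⟩
  exact haj.not_ge ((mem_insert.1 hj).elim le_of_eq fun hj => (ha j hj).le)

theorem indegree_insert_self : indegree h (insert a s) a = #{i ∈ s | i < a ∧ a ≤ h i} := by
  rw [indegree, filter_insert, if_neg fun hlt => lt_irrefl _ hlt.1]

theorem indegree_insert_of_lt (hi : i < a) : indegree h (insert a s) i = indegree h s i := by
  rw [indegree, filter_insert, if_neg fun hlt => hi.not_gt hlt.1, indegree]

theorem outdegree_insert_of_notMem (has : a ∉ s) (hi : i < a) :
    outdegree h (insert a s) i = outdegree h s i + if a ≤ h i then 1 else 0 := by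
  unfold outdegree
  split_ifs with hai
  · rw [filter_insert, if_pos ⟨hi, hai⟩,
      card_insert_of_notMem fun h => has (mem_of_mem_filter _ h)]
  · rw [filter_insert, if_neg fun hlt => hai hlt.2, add_zero]

/-- The vertices attacking a vertex above `s` form a clique which is an upper set of `s`. -/
theorem outdegree_eq_card_filter_lt (hmono : Monotone h) (ha : ∀ x ∈ s, x < a) (hai : a ≤ h i) :
    outdegree h s i = #{j ∈ {j ∈ s | a ≤ h j} | i < j} := by
  rw [outdegree, filter_filter]
  exact congrArg card <| filter_congr fun j hj =>
    ⟨fun hij => ⟨hai.trans (hmono hij.1.le), hij.1⟩, fun hij => ⟨hij.2, (ha j hj).le.trans hai⟩⟩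

theorem sum_apply_outdegree_eq_sum_apply_indegree {M : Type*} [AddCommMonoid M]
    (hmono : Monotone h) (f : ℕ → M) (s : Finset α) :
    ∑ i ∈ s, f (outdegree h s i) = ∑ i ∈ s, f (indegree h s i) := by
  induction s using Finset.induction_on_max with
  | empty => simp
  | insert a s ha ih =>
    have has : a ∉ s := fun h => lt_irrefl _ (ha a h)
    set S : Finset α := {i ∈ s | a ≤ h i}
    have hin : indegree h (insert a s) a = #S := by
      rw [indegree_insert_self]
      exact congrArg card <| filter_congr fun i hi => and_iff_right (ha i hi)
    -- On the clique `S`, the out-degrees `0, …, #S - 1` in `s` become `1, …, #S` in `insert a s`.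
    have hold : ∑ i ∈ S, f (outdegree h s i) = ∑ k ∈ range #S, f k := by
      rw [← sum_apply_card_filter_lt f]
      exact sum_congr rfl fun i hi => by
        rw [outdegree_eq_card_filter_lt hmono ha (mem_filter.1 hi).2]
    have hnew : ∑ i ∈ S, f (outdegree h (insert a s) i) = ∑ k ∈ range #S, f (k + 1) := by
      rw [← sum_apply_card_filter_lt fun k => f (k + 1)]
      refine sum_congr rfl fun i hi => ?_
      obtain ⟨his, hai⟩ := mem_filter.1 hi
      rw [outdegree_insert_of_notMem has (ha i his), if_pos hai,
        outdegree_eq_card_filter_lt hmono ha hai]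
    have hrest : ∑ i ∈ s with ¬a ≤ h i, f (outdegree h (insert a s) i) =
        ∑ i ∈ s with ¬a ≤ h i, f (outdegree h s i) :=
      sum_congr rfl fun i hi => by
        obtain ⟨his, hai⟩ := mem_filter.1 hi
        rw [outdegree_insert_of_notMem has (ha i his), if_neg hai, add_zero]
    calc ∑ i ∈ insert a s, f (outdegree h (insert a s) i)
        = f 0 + (∑ k ∈ range #S, f (k + 1) + ∑ i ∈ s with ¬a ≤ h i, f (outdegree h s i)) := by
          rw [sum_insert has, outdegree_insert_max_self ha, ← hnew, ← hrest,
            sum_filter_add_sum_filter_not]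
      _ = f #S + (∑ k ∈ range #S, f k + ∑ i ∈ s with ¬a ≤ h i, f (outdegree h s i)) := by
          rw [← add_assoc, add_comm (f 0), ← sum_range_succ', sum_range_succ,
            add_comm _ (f #S), add_assoc]
      _ = f #S + ∑ i ∈ s, f (indegree h s i) := by
          rw [← hold, sum_filter_add_sum_filter_not, ih]
      _ = ∑ i ∈ insert a s, f (indegree h (insert a s) i) := by
          rw [sum_insert has, hin]
          exact congrArg _ <| sum_congr rfl fun i hi => by rw [indegree_insert_of_lt (ha i hi)]

theorem exists_perm_apply_eq_of_card_fiber_eq {α β : Type*} [Fintype α] [DecidableEq β]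
    (f g : α → β) (hfg : ∀ b, #{x | f x = b} = #{x | g x = b}) :
    ∃ φ : Equiv.Perm α, ∀ x, g (φ x) = f x := by
  have e (b : β) : {x // f x = b} ≃ {x // g x = b} :=
    Fintype.equivOfCardEq (by simpa only [Fintype.card_subtype] using hfg b)
  exact ⟨Equiv.ofFiberEquiv e, Equiv.ofFiberEquiv_map e⟩

theorem exists_perm_outdegree_eq_indegree {β : Type*} [Fintype α] [DecidableEq β]
    (hmono : Monotone h) (κ : α → β) :
    ∃ φ : Equiv.Perm α, κ ∘ φ = κ ∧
      ∀ i, outdegree h {j | κ j = κ i} i = indegree h {j | κ j = κ i} (φ i) := by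
  obtain ⟨φ, hφ⟩ := exists_perm_apply_eq_of_card_fiber_eq
    (fun i => (κ i, outdegree h {j | κ j = κ i} i)) (fun i => (κ i, indegree h {j | κ j = κ i} i))
    fun ⟨a, d⟩ => by
      have hclass := sum_apply_outdegree_eq_sum_apply_indegree hmono
        (fun k => if k = d then 1 else 0) ({j | κ j = a} : Finset α)
      simp only [← card_filter, filter_filter] at hclass
      convert hclass using 3 <;> simp +contextual [Prod.ext_iff]
  have hκ (i) : κ (φ i) = κ i := congrArg Prod.fst (hφ i)
  refine ⟨φ, funext hκ, fun i => ?_⟩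
  simpa only [hκ] using (congrArg Prod.snd (hφ i)).symm

end Degrees

section MonochromaticAttacks

variable {α β : Type*} [LinearOrder α] [Fintype α] [DecidableEq β]

/-- The attacks `i < j ≤ h i` between positions of the same colour. -/
def monochromaticAttacks (h : α → α) (κ : α → β) : Finset (α × α) :=
  {p ∈ ({p | p.1 < p.2 ∧ p.2 ≤ h p.1} : Finset (α × α)) | κ p.1 = κ p.2}

variable (h : α → α) (κ : α → β) (g : α → ℕ)

theorem sum_monochromaticAttacks (f : α × α → ℕ) :
    ∑ p ∈ monochromaticAttacks h κ, f p =
      ∑ p : α × α with p.1 < p.2 ∧ p.2 ≤ h p.1, if κ p.1 = κ p.2 then f p else 0 :=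
  sum_filter _ _

theorem sum_monochromaticAttacks_fst :
    ∑ p ∈ monochromaticAttacks h κ, g p.1 = ∑ i, outdegree h {j | κ j = κ i} i * g i := by
  rw [monochromaticAttacks, filter_filter, sum_filter, Fintype.sum_prod_type]
  refine sum_congr rfl fun i _ => ?_
  rw [outdegree, filter_filter, ← smul_eq_mul, ← sum_const, sum_filter]
  simp only [and_comm, eq_comm]

theorem sum_monochromaticAttacks_snd :
    ∑ p ∈ monochromaticAttacks h κ, g p.2 = ∑ j, indegree h {i | κ i = κ j} j * g j := by
  rw [monochromaticAttacks, filter_filter, sum_filter, Fintype.sum_prod_type_right]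
  refine sum_congr rfl fun j _ => ?_
  rw [indegree, filter_filter, ← smul_eq_mul, ← sum_const, sum_filter]
  simp only [and_comm]

variable {h} in
theorem exists_perm_sum_monochromaticAttacks (hmono : Monotone h) :
    ∃ σ : Equiv.Perm α, κ ∘ σ = κ ∧ ∀ g : α → ℕ,
      ∑ p ∈ monochromaticAttacks h κ, g (σ p.1) = ∑ p ∈ monochromaticAttacks h κ, g p.2 := by
  obtain ⟨σ, hσ, hdeg⟩ := exists_perm_outdegree_eq_indegree hmono κ
  refine ⟨σ, hσ, fun g => ?_⟩
  have hσκ (i) : κ (σ i) = κ i := congrFun hσ i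
  calc ∑ p ∈ monochromaticAttacks h κ, g (σ p.1)
      = ∑ i, outdegree h {j | κ j = κ i} i * g (σ i) := sum_monochromaticAttacks_fst h κ (g ∘ σ)
    _ = ∑ i, indegree h {j | κ j = κ (σ i)} (σ i) * g (σ i) := by simp only [hdeg, hσκ]
    _ = ∑ j, indegree h {i | κ i = κ j} j * g j :=
        Equiv.sum_comp σ fun j => indegree h {i | κ i = κ j} j * g j
    _ = ∑ p ∈ monochromaticAttacks h κ, g p.2 := (sum_monochromaticAttacks_snd h κ g).symm

end MonochromaticAttacks

theorem apply_mem_iff_of_forall_notMem {α : Type*} {L : Finset α} {σ : Equiv.Perm α}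
    (hσ : ∀ i ∉ L, σ i = i) (i : α) : σ i ∈ L ↔ i ∈ L := by
  refine ⟨fun hσi => ?_, fun hi => ?_⟩
  · by_contra hi
    exact hi (hσ i hi ▸ hσi)
  · by_contra hσi
    exact hσi ((σ.injective (hσ _ hσi)).symm ▸ hi)

theorem epsSuper_eq_ite (x y : ℕ × Bool) :
    epsSuper x y = if x.1 = y.1 then x.2.toNat else if y.1 < x.1 then 1 else 0 := by
  obtain ⟨v, _ | _⟩ := x <;> simp [epsSuper] <;> grind

/-- Raising every barred letter by one keeps the order of letters, except that `v` and the raised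
`(v - 1)` barred become tied. -/
theorem epsSuper_eq_ite_raised (x y : ℕ × Bool) :
    epsSuper x y = if x.1 + x.2.toNat = y.1 + y.2.toNat then y.2.toNat
      else if y.1 + y.2.toNat < x.1 + x.2.toNat then 1 else 0 := by
  obtain ⟨v, _ | _⟩ := x <;> obtain ⟨w, _ | _⟩ := y <;>
    simp [epsSuper] <;> grind

section Raise

variable {n : ℕ}

/-- The set `L` of positions is a union of connected components of the attack graph of `h`. -/
def IsAttackClosed (h : Fin n → Fin n) (L : Finset (Fin n)) : Prop :=
  ∀ ⦃i j⦄, i < j → j ≤ h i → (i ∈ L ↔ j ∈ L)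

/-- The super label obtained from `c` by raising by `k` the value of each barred letter at a
position of `L`. -/
def raiseBars (L : Finset (Fin n)) (k : ℕ) (c : Fin n → ℕ × Bool) (i : Fin n) : ℕ × Bool :=
  ((c i).1 + if i ∈ L then k * (c i).2.toNat else 0, (c i).2)

/-- The colouring of the positions in `L` by the values of the super label `c`, each other
position having a colour of its own; so a permutation preserves it if it preserves the values
of `c` and moves only positions in `L`. -/
def valueColor (L : Finset (Fin n)) (c : Fin n → ℕ × Bool) (i : Fin n) : ℕ ⊕ Fin n :=
  if i ∈ L then .inl (c i).1 else .inr i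

variable {L : Finset (Fin n)} {k : ℕ} {c : Fin n → ℕ × Bool} {σ : Equiv.Perm (Fin n)}

theorem raiseBars_injective : Function.Injective (raiseBars L k) := by
  refine fun c c' hcc' => funext fun i => ?_
  have hi := congrFun hcc' i
  simp only [raiseBars, Prod.mk.injEq] at hi
  obtain ⟨hval, hbar⟩ := hi
  rw [hbar, Nat.add_right_cancel_iff] at hval
  exact Prod.ext hval hbar

theorem raiseBars_zero : raiseBars L 0 c = c := by
  funext i
  simp [raiseBars]

theorem raiseBars_raiseBars_one : raiseBars L k (raiseBars L 1 c) = raiseBars L (k + 1) c := by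
  funext i
  simp only [raiseBars]
  split_ifs <;> ring_nf

theorem raiseBars_comp_perm (hσ : ∀ i, σ i ∈ L ↔ i ∈ L) :
    raiseBars L k (c ∘ σ) = raiseBars L k c ∘ σ := by
  funext i
  simp [raiseBars, hσ]

theorem apply_eq_self_of_valueColor_comp_eq (hσ : valueColor L c ∘ σ = valueColor L c) {i : Fin n}
    (hi : i ∉ L) : σ i = i := by
  have hσi := congrFun hσ i
  rw [Function.comp_apply, valueColor, valueColor, if_neg hi] at hσi
  split_ifs at hσi
  exact Sum.inr_injective hσi

theorem mem_iff_of_valueColor_comp_eq (hσ : valueColor L c ∘ σ = valueColor L c) (i : Fin n) :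
    σ i ∈ L ↔ i ∈ L :=
  apply_mem_iff_of_forall_notMem (fun _ => apply_eq_self_of_valueColor_comp_eq hσ) i

theorem valueColor_comp_perm (hσ : valueColor L c ∘ σ = valueColor L c) :
    valueColor L (c ∘ σ) = valueColor L c := by
  funext i
  have hσi := congrFun hσ i
  have hmem := mem_iff_of_valueColor_comp_eq hσ i
  simp only [Function.comp_apply, valueColor, hmem] at hσi ⊢
  split_ifs with hi
  · simpa only [if_pos hi] using hσi
  · rfl

theorem valueColor_raiseBars_comp_perm
    (hσ : valueColor L (raiseBars L k c) ∘ σ = valueColor L (raiseBars L k c)) :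
    valueColor L (raiseBars L k (c ∘ σ)) = valueColor L (raiseBars L k c) := by
  rw [raiseBars_comp_perm (mem_iff_of_valueColor_comp_eq hσ), valueColor_comp_perm hσ]

/-- The inversions of `c` and of the raised label differ only at attacks between letters whose
raised values agree: there the former counts barred attacked letters, the latter barred attacking
ones. -/
theorem epsSuper_raiseBars_perm_add
    (hσ : valueColor L (raiseBars L 1 c) ∘ σ = valueColor L (raiseBars L 1 c)) {i j : Fin n}
    (hij : i ≠ j) (hijL : i ∈ L ↔ j ∈ L) :
    epsSuper (raiseBars L 1 c (σ i)) (raiseBars L 1 c (σ j)) +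
        (if valueColor L (raiseBars L 1 c) i = valueColor L (raiseBars L 1 c) j
          then (c j).2.toNat else 0) =
      epsSuper (c i) (c j) +
        (if valueColor L (raiseBars L 1 c) i = valueColor L (raiseBars L 1 c) j
          then (c (σ i)).2.toNat else 0) := by
  by_cases hi : i ∈ L
  · have hj := hijL.1 hi
    have hval {x : Fin n} (hx : x ∈ L) : (raiseBars L 1 c (σ x)).1 = (c x).1 + (c x).2.toNat := by
      have hσx := congrFun hσ x
      have hmem := (mem_iff_of_valueColor_comp_eq hσ x).2 hx
      simpa [valueColor, raiseBars, hx, hmem] using hσx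
    rw [epsSuper_eq_ite, epsSuper_eq_ite_raised, hval hi, hval hj]
    simp only [valueColor, raiseBars, hi, hj, if_true, one_mul, Sum.inl.injEq]
    split_ifs <;> ring
  · have hj := mt hijL.2 hi
    simp [valueColor, raiseBars, apply_eq_self_of_valueColor_comp_eq hσ, hi, hj, hij]

theorem invPi_raiseBars_comp_perm {h : Fin n → Fin n} (hL : IsAttackClosed h L)
    (hσ : valueColor L (raiseBars L 1 c) ∘ σ = valueColor L (raiseBars L 1 c))
    (hbal : ∀ g : Fin n → ℕ,
      ∑ p ∈ monochromaticAttacks h (valueColor L (raiseBars L 1 c)), g (σ p.1) =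
        ∑ p ∈ monochromaticAttacks h (valueColor L (raiseBars L 1 c)), g p.2) :
    invPi h (raiseBars L 1 (c ∘ σ)) = invPi h c := by
  rw [raiseBars_comp_perm (mem_iff_of_valueColor_comp_eq hσ)]
  refine Nat.add_right_cancel (Eq.trans ?_ (congrArg _ (hbal fun i => (c i).2.toNat)))
  rw [sum_monochromaticAttacks, sum_monochromaticAttacks, invPi, invPi, ← sum_add_distrib,
    ← sum_add_distrib]
  refine sum_congr rfl fun ⟨i, j⟩ hij => ?_
  obtain ⟨hlt, hle⟩ := (mem_filter.1 hij).2
  exact epsSuper_raiseBars_perm_add hσ hlt.ne (hL hlt hle)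

end Raise

section Vanishing

variable {R : Type*} [CommRing R] (q : R) {n : ℕ} (h : Fin n → Fin n)

/-- The signed weight `(-1)^{#bars} q^{inv_π(c)}` with which a super label `c` contributes to
`χ_{π,l}`. -/
def superWeight (c : Fin n → ℕ × Bool) : R :=
  (-1) ^ #{i | (c i).2 = true} * q ^ invPi h c

/-- The super label `c` with the bar at position `p` toggled and all values unchanged. -/
def flipBar (p : Fin n) (c : Fin n → ℕ × Bool) : Fin n → ℕ × Bool :=
  Function.update c p ((c p).1, !(c p).2)

variable {h} {p : Fin n} {c : Fin n → ℕ × Bool}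

theorem neg_one_pow_card_bars_flipBar :
    (-1 : R) ^ #{i | (flipBar p c i).2 = true} = -(-1) ^ #{i | (c i).2 = true} := by
  simp only [← prod_const, prod_filter]
  rw [← mul_prod_erase _ _ (mem_univ p), ← mul_prod_erase _ _ (mem_univ p), ← neg_mul]
  congr 1
  · cases hp : (c p).2 <;> simp [flipBar, hp]
  · exact prod_congr rfl fun i hi => by rw [flipBar, Function.update_of_ne (ne_of_mem_erase hi)]

/-- The bar of an attacked letter does not affect inversions, so toggling the bar at a position
attacking nothing leaves them alone. -/
theorem invPi_flipBar (hp : h p ≤ p) : invPi h (flipBar p c) = invPi h c := by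
  refine sum_congr rfl fun ⟨i, j⟩ hij => ?_
  obtain ⟨hlt, hle⟩ := (mem_filter.1 hij).2
  have hip : i ≠ p := by
    rintro rfl
    exact (hlt.trans_le (hle.trans hp)).false
  have hi : flipBar p c i = c i := Function.update_of_ne hip _ _
  have hj : (flipBar p c j).1 = (c j).1 := by
    obtain rfl | hjp := eq_or_ne j p
    · simp [flipBar]
    · rw [flipBar, Function.update_of_ne hjp]
  simp only [epsSuper, hi, hj]

theorem sum_superWeight_eq_zero_of_flipBar_mem (hp : h p ≤ p) {S : Finset (Fin n → ℕ × Bool)}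
    (hS : ∀ c ∈ S, flipBar p c ∈ S) : ∑ c ∈ S, superWeight q h c = 0 := by
  refine sum_involution (fun c _ => flipBar p c) ?_ ?_ hS ?_
  · intro c _
    rw [superWeight, superWeight, neg_one_pow_card_bars_flipBar, invPi_flipBar hp, neg_mul,
      add_neg_cancel]
  · intro c _ _ hc
    simpa [flipBar] using congrArg Prod.snd (congrFun hc p)
  · intro c _
    simp [flipBar]

variable {L : Finset (Fin n)} {S : Finset (Fin n → ℕ × Bool)}

theorem sum_superWeight_raiseBars_one (hmono : Monotone h) (hL : IsAttackClosed h L)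
    (hS : ∀ c ∈ S, ∀ σ : Equiv.Perm (Fin n), (∀ i ∉ L, σ i = i) → c ∘ σ ∈ S) :
    ∑ c ∈ S, superWeight q h (raiseBars L 1 c) = ∑ c ∈ S, superWeight q h c := by
  choose φ hφ hbal using fun κ : Fin n → ℕ ⊕ Fin n =>
    exists_perm_sum_monochromaticAttacks κ hmono
  have hφ' (κ : Fin n → ℕ ⊕ Fin n) : κ ∘ (φ κ).symm = κ :=
    ((φ κ).comp_symm_eq _ _).2 (hφ κ).symm
  let κ (c : Fin n → ℕ × Bool) : Fin n → ℕ ⊕ Fin n := valueColor L (raiseBars L 1 c)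
  symm
  refine sum_nbij' (fun c => c ∘ φ (κ c)) (fun c => c ∘ (φ (κ c)).symm)
    (fun c hc => hS c hc _ fun _ => apply_eq_self_of_valueColor_comp_eq (hφ (κ c)))
    (fun c hc => hS c hc _ fun _ => apply_eq_self_of_valueColor_comp_eq (hφ' (κ c))) ?_ ?_ ?_
  · intro c _
    have hκ : κ (c ∘ φ (κ c)) = κ c := valueColor_raiseBars_comp_perm (hφ _)
    rw [hκ, Function.comp_assoc, Equiv.self_comp_symm, Function.comp_id]
  · intro c _
    have hκ : κ (c ∘ (φ (κ c)).symm) = κ c := valueColor_raiseBars_comp_perm (hφ' _)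
    rw [hκ, Function.comp_assoc, Equiv.symm_comp_self, Function.comp_id]
  · intro c _
    rw [superWeight, superWeight, invPi_raiseBars_comp_perm hL (hφ _) (hbal _)]
    congr 2
    exact (card_equiv (φ (κ c)) fun i => by simp [raiseBars]).symm

theorem sum_superWeight_raiseBars (hmono : Monotone h) (hL : IsAttackClosed h L)
    (hS : ∀ c ∈ S, ∀ σ : Equiv.Perm (Fin n), (∀ i ∉ L, σ i = i) → c ∘ σ ∈ S) (k : ℕ) :
    ∑ c ∈ S, superWeight q h (raiseBars L k c) = ∑ c ∈ S, superWeight q h c := by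
  induction k generalizing S with
  | zero => simp only [raiseBars_zero]
  | succ k ih =>
    have hraised : ∀ c ∈ S.map ⟨raiseBars L 1, raiseBars_injective⟩, ∀ σ : Equiv.Perm (Fin n),
        (∀ i ∉ L, σ i = i) → c ∘ σ ∈ S.map ⟨raiseBars L 1, raiseBars_injective⟩ := by
      intro c hc σ hσ
      obtain ⟨c, hcS, rfl⟩ := mem_map.1 hc
      exact mem_map.2
        ⟨c ∘ σ, hS c hcS σ hσ, raiseBars_comp_perm (apply_mem_iff_of_forall_notMem hσ)⟩
    have hih := ih hraised
    simp only [sum_map, Function.Embedding.coeFn_mk, raiseBars_raiseBars_one] at hih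
    rw [hih, sum_superWeight_raiseBars_one q hmono hL hS]

theorem exists_mem_apply_le_of_isAttackClosed (hL : IsAttackClosed h L) (hne : L.Nonempty) :
    ∃ p ∈ L, h p ≤ p := by
  refine ⟨L.max' hne, L.max'_mem hne, le_of_not_gt fun hlt => ?_⟩
  exact hlt.not_ge (L.le_max' _ ((hL hlt le_rfl).1 (L.max'_mem hne)))

theorem sum_superWeight_raiseBars_eq_zero (hmono : Monotone h) (hL : IsAttackClosed h L)
    (hne : L.Nonempty)
    (hS : ∀ c ∈ S, ∀ σ : Equiv.Perm (Fin n), (∀ i ∉ L, σ i = i) → c ∘ σ ∈ S)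
    (hflip : ∀ c ∈ S, ∀ p ∈ L, flipBar p c ∈ S) (k : ℕ) :
    ∑ c ∈ S, superWeight q h (raiseBars L k c) = 0 := by
  obtain ⟨p, hpL, hp⟩ := exists_mem_apply_le_of_isAttackClosed hL hne
  rw [sum_superWeight_raiseBars q hmono hL hS]
  exact sum_superWeight_eq_zero_of_flipBar_mem q hp fun c hc => hflip c hc p hpL

end Vanishing

section SuperLabel

variable {n : ℕ}

/-- The super label built like `superLabel` from the values `b` and the bars `t`, but with barred
letters raised by `k` only at the positions outside `L`. -/
def superLabelOff (L : Finset (Fin n)) (k : ℕ) (b : Fin n → ℕ) (t : Fin n → Bool) :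
    Fin n → ℕ × Bool :=
  raiseBars Lᶜ k fun i => (b i, t i)

variable {L : Finset (Fin n)} {k : ℕ} {b : Fin n → ℕ} {t : Fin n → Bool}

theorem raiseBars_sup_superLabelOff : raiseBars L (univ.sup b) (superLabelOff L (univ.sup b) b t) =
    superLabel b t := by
  funext i
  by_cases hi : i ∈ L <;> cases ht : t i <;> simp [superLabel, superLabelOff, raiseBars, hi, ht]

theorem superLabelOff_comp_perm {σ : Equiv.Perm (Fin n)} (hσ : ∀ i ∉ L, σ i = i) :
    superLabelOff L k b t ∘ σ = superLabelOff L k (b ∘ σ) (t ∘ σ) :=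
  (raiseBars_comp_perm fun i => by
    rw [mem_compl, mem_compl, apply_mem_iff_of_forall_notMem hσ]).symm

theorem flipBar_superLabelOff {p : Fin n} (hp : p ∈ L) :
    flipBar p (superLabelOff L k b t) = superLabelOff L k b (Function.update t p !t p) := by
  funext i
  obtain rfl | hip := eq_or_ne i p
  · simp [flipBar, superLabelOff, raiseBars, hp]
  · simp [flipBar, superLabelOff, raiseBars, hip]

theorem superLabelOff_injective :
    Function.Injective fun p : (Fin n → ℕ) × (Fin n → Bool) => superLabelOff L k p.1 p.2 :=
  fun p p' hpp' => by
    have hpair := raiseBars_injective hpp'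
    exact Prod.ext (funext fun i => congrArg Prod.fst (congrFun hpair i))
      (funext fun i => congrArg Prod.snd (congrFun hpair i))

theorem sup_comp_perm {α β : Type*} [Fintype α] [SemilatticeSup β] [OrderBot β] (b : α → β)
    (σ : Equiv.Perm α) : univ.sup (b ∘ σ) = univ.sup b := by
  classical rw [← sup_image, image_univ_equiv]

/-- Unlike in `superLabel`, the shift `k` is the same for all `b`. -/
theorem sum_superWeight_raiseBars_superLabelOff {R : Type*} [CommRing R] (q : R)
    {h : Fin n → Fin n} (hmono : Monotone h) (hL : IsAttackClosed h L) (hne : L.Nonempty)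
    {U : Fin n → Prop} [DecidablePred U] (hLU : ∀ i ∈ L, U i) {B : Finset (Fin n → ℕ)}
    (hB : ∀ b ∈ B, ∀ σ : Equiv.Perm (Fin n), b ∘ σ ∈ B) (k : ℕ) :
    ∑ b ∈ B, ∑ t : Fin n → Bool with ∀ i, t i = true → U i,
      superWeight q h (raiseBars L k (superLabelOff L k b t)) = 0 := by
  set T : Finset (Fin n → Bool) := {t | ∀ i, t i = true → U i}
  have hT {t} : t ∈ T ↔ ∀ i, t i = true → U i := mem_filter_univ t
  let S := (B ×ˢ T).map ⟨_, superLabelOff_injective (L := L) (k := k)⟩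
  have hmem {b t} (hb : b ∈ B) (ht : t ∈ T) : superLabelOff L k b t ∈ S :=
    mem_map.2 ⟨(b, t), mem_product.2 ⟨hb, ht⟩, rfl⟩
  have hperm : ∀ c ∈ S, ∀ σ : Equiv.Perm (Fin n), (∀ i ∉ L, σ i = i) → c ∘ σ ∈ S := by
    intro c hc σ hσ
    obtain ⟨⟨b, t⟩, hbt, rfl⟩ := mem_map.1 hc
    obtain ⟨hb, ht⟩ := mem_product.1 hbt
    have htσ : t ∘ σ ∈ T := hT.2 fun i hi => by
      by_cases hiL : i ∈ L
      · exact hLU i hiL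
      · exact hT.1 ht i (by rwa [Function.comp_apply, hσ i hiL] at hi)
    exact superLabelOff_comp_perm hσ ▸ hmem (hB b hb σ) htσ
  have hflip : ∀ c ∈ S, ∀ p ∈ L, flipBar p c ∈ S := by
    intro c hc p hp
    obtain ⟨⟨b, t⟩, hbt, rfl⟩ := mem_map.1 hc
    obtain ⟨hb, ht⟩ := mem_product.1 hbt
    have htp : Function.update t p (!t p) ∈ T := hT.2 fun i hi => by
      obtain rfl | hip := eq_or_ne i p
      · exact hLU i hp
      · exact hT.1 ht i (by rwa [Function.update_of_ne hip] at hi)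
    exact flipBar_superLabelOff hp ▸ hmem hb htp
  rw [← sum_product' (f := fun b t => superWeight q h (raiseBars L k (superLabelOff L k b t)))]
  simpa only [S, sum_map, Function.Embedding.coeFn_mk] using
    sum_superWeight_raiseBars_eq_zero q hmono hL hne hperm hflip k

/-- The touch block `{i | i < i₀}` may be any nonempty union of connected components all of whose
positions are allowed to carry bars. -/
theorem chi_pi_touch_point_vanishes_general {R : Type*} [CommRing R] (q : R) {h : Fin n → Fin n}
    (hmono : Monotone h) (hL : IsAttackClosed h L) (hne : L.Nonempty) {U : Fin n → Prop}
    [DecidablePred U] (hLU : ∀ i ∈ L, U i) (b₀ : Fin n → ℕ) :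
    ∑ b ∈ univ.image fun σ : Equiv.Perm (Fin n) => b₀ ∘ ⇑σ,
      ∑ t : Fin n → Bool with ∀ i, t i = true → U i,
        (-1) ^ #{i | t i = true} * q ^ invPi h (superLabel b t) = 0 := by
  have hB : ∀ b ∈ univ.image fun σ : Equiv.Perm (Fin n) => b₀ ∘ ⇑σ, ∀ σ : Equiv.Perm (Fin n),
      b ∘ σ ∈ univ.image fun σ : Equiv.Perm (Fin n) => b₀ ∘ ⇑σ := fun b hb σ => by
    obtain ⟨τ, -, rfl⟩ := mem_image.1 hb
    exact mem_image.2 ⟨τ * σ, mem_univ _, rfl⟩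
  rw [← sum_superWeight_raiseBars_superLabelOff q hmono hL hne hLU hB (univ.sup b₀)]
  refine sum_congr rfl fun b hb => sum_congr rfl fun t _ => ?_
  obtain ⟨τ, -, rfl⟩ := mem_image.1 hb
  rw [← sup_comp_perm b₀ τ, raiseBars_sup_superLabelOff]
  rfl

theorem isAttackClosed_filter_val_lt {h : Fin n → Fin n} {m : ℕ}
    (hm : ∀ i : Fin n, (i : ℕ) < m → (h i : ℕ) < m) :
    IsAttackClosed h ({i | (i : ℕ) < m} : Finset (Fin n)) := fun i j hij hji => by
  simp only [mem_filter_univ]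
  exact ⟨fun hi => lt_of_le_of_lt hji (hm i hi), fun hj => lt_trans hij hj⟩

end SuperLabel

/-- Vanishing of `χ_{π,l}` at a touch point: if there is `i₀` with `1 ≤ i₀ < n`,
`i₀ ≤ n − l`, and `h(j) ≤ i₀` for all `j ≤ i₀` (indices `1`-based), then for every
label `b₀` the coefficient of the monomial of content `b₀` in `χ_{π,l}[Y;q]`, namely
`∑_{b rearranging b₀} ∑_{t : tᵢ=1 ⇒ i ≤ n−l} (−1)^{|t|} q^{inv_π(b·t)}`,
vanishes in `ℤ[q]`. -/
theorem chi_pi_touch_point_vanishes (n : ℕ) (hn : 1 ≤ n)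
    (h : Fin n → Fin n) (hmono : Monotone h) (hge : ∀ i, i ≤ h i)
    (l : ℕ) (hl : l ≤ n)
    (htouch : ∃ i₀ : ℕ, 1 ≤ i₀ ∧ i₀ < n ∧ i₀ ≤ n - l ∧
      ∀ j : Fin n, (j : ℕ) + 1 ≤ i₀ → ((h j : ℕ) + 1 ≤ i₀))
    (b₀ : Fin n → ℕ) (hb₀ : ∀ i, 1 ≤ b₀ i) :
    ∑ b ∈ Finset.image (fun σ : Equiv.Perm (Fin n) => b₀ ∘ ⇑σ) Finset.univ,
      ∑ t ∈ Finset.univ.filter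
          (fun t : Fin n → Bool => ∀ i, t i = true → (i : ℕ) + 1 ≤ n - l),
        (-1 : Polynomial ℤ) ^ ((Finset.univ.filter (fun i => t i = true)).card)
          * Polynomial.X ^ invPi h (superLabel b t) = 0 := by
  obtain ⟨m, hm₀, -, hml, hm⟩ := htouch
  exact chi_pi_touch_point_vanishes_general Polynomial.X hmono (isAttackClosed_filter_val_lt hm)
    ⟨⟨0, hn⟩, (mem_filter_univ _).2 hm₀⟩ (fun i hi => ((mem_filter_univ i).1 hi).trans_le hml) b₀
end
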